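/- Let Ω ⊂ ℝ³ be open and connected with Ω ⊂ {x : x₁² + x₂² < C₀²} for some C₀ > 0, and suppose the uniform cross-sectional Poincaré inequality holds: there is Λ₀ > 0 such that for every t ∈ ℝ and every C¹ function w on the closure of Ω, ‖w − (average of w over Σ_t)‖_{L²(Σ_t)} ≤ Λ₀ ‖∇w‖_{L²(Σ_t)}, where Σ_t = {x′ ∈ ℝ² : (x′, t) ∈ Ω} has positive finite two-dimensional measure. Let A : Ω → (3×3 symmetric matrices) be measurable with λ|ξ|² ≤ ξᵀ A(x) ξ ≤ Λ|ξ|² for all x ∈ Ω, ξ ∈ ℝ³, where 0 < λ ≤ Λ. Suppose Φ is C¹ on the closure of Ω with sup_Ω |∇Φ| < ∞, ∫_Ω (A ∇Φ) · ∇ψ dx = 0 for every C¹ function ψ : ℝ³ → ℝ with compact support, and ∫_{Σ_t} (A ∇Φ) · e₃ dx′ = 0 for every t ∈ ℝ. Then ∇Φ = 0 on Ω. -/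

import Mathlib

open Real Set MeasureTheory

/-- Gradient of a scalar function on ℝ³. -/
noncomputable def grad3 (φ : (Fin 3 → ℝ) → ℝ) (x : Fin 3 → ℝ) : Fin 3 → ℝ :=
  fun i => fderiv ℝ φ x (Pi.single i 1)

/-- Euclidean length of a vector of ℝ³. -/
noncomputable def norm3 (u : Fin 3 → ℝ) : ℝ := Real.sqrt (∑ i, (u i) ^ 2)

/-- Squared Euclidean length of a vector of ℝ³. -/
noncomputable def normSq3 (u : Fin 3 → ℝ) : ℝ := ∑ i, (u i) ^ 2

/-- The cross-section Σ_t = {x′ ∈ ℝ² : (x′, t) ∈ Ω}. -/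
def crossSection (Ω : Set (Fin 3 → ℝ)) (t : ℝ) : Set (Fin 2 → ℝ) :=
  {x' | (Fin.snoc x' t : Fin 3 → ℝ) ∈ Ω}



section helpers
open Filter Topology

abbrev E3 : Type := Fin 3 → ℝ

lemma bump_exists {Q O : Set E3} (hQ : IsCompact Q) (hO : IsOpen O) (h : Q ⊆ O) :
    ∃ θ : E3 → ℝ, ContDiff ℝ 1 θ ∧ HasCompactSupport θ ∧ tsupport θ ⊆ O ∧
      ∃ N, IsOpen N ∧ Q ⊆ N ∧ ∀ x ∈ N, θ x = 1 := by
  obtain ⟨L, hL, hQL, hLO⟩ := exists_compact_between hQ hO h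
  obtain ⟨g, hg1, hg0, -⟩ := exists_contMDiffMap_one_nhds_of_subset_interior
    (modelWithCornersSelf ℝ E3) (n := 1) hQ.isClosed hQL
  have hts : tsupport g ⊆ L := by
    apply closure_minimal _ hL.isClosed
    intro x hx
    by_contra hxL
    exact hx (hg0 x hxL)
  refine ⟨g, g.contMDiff.contDiff, hL.of_isClosed_subset (isClosed_tsupport _) hts,
    hts.trans hLO, ?_⟩
  obtain ⟨N, hN, hQN, hN1⟩ := eventually_nhdsSet_iff_exists.1 hg1
  exact ⟨N, hN, hQN, hN1⟩

lemma mollify {C : NNReal} {h : E3 → ℝ} (hh : LipschitzWith C h) {ε : ℝ} (hε : 0 < ε) :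
    ∃ g : E3 → ℝ, ContDiff ℝ 1 g ∧ LipschitzWith C g ∧ ∀ x, |g x - h x| ≤ ε := by
  obtain ⟨r, hr, hCr⟩ : ∃ r : ℝ, 0 < r ∧ C * r ≤ ε := by
    refine ⟨ε / (C + 1), by positivity, ?_⟩
    rw [mul_div_assoc', div_le_iff₀ (by positivity)]
    nlinarith [C.coe_nonneg]
  let φ : ContDiffBump (0 : E3) := ⟨r / 2, r, half_pos hr, half_lt_self hr⟩
  have hconvInt : ∀ x, Integrable (fun t => φ.normed volume t * h (x - t)) := by
    intro x
    apply Continuous.integrable_of_hasCompactSupport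
    · exact φ.continuous_normed.mul (hh.continuous.comp (by fun_prop))
    · exact φ.hasCompactSupport_normed.mul_right
  refine ⟨convolution (φ.normed volume) h (ContinuousLinearMap.lsmul ℝ ℝ) volume, ?_, ?_, ?_⟩
  · exact φ.hasCompactSupport_normed.contDiff_convolution_left _ φ.contDiff_normed
      hh.continuous.locallyIntegrable
  · apply LipschitzWith.of_dist_le_mul
    intro x y
    simp only [convolution, ContinuousLinearMap.lsmul_apply, smul_eq_mul]
    rw [dist_eq_norm, ← integral_sub (hconvInt x) (hconvInt y)]
    calc ‖∫ t, (φ.normed volume t * h (x - t) - φ.normed volume t * h (y - t))‖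
        ≤ ∫ t, φ.normed volume t * (C * dist x y) := by
          apply norm_integral_le_of_norm_le (φ.integrable_normed.mul_const _)
          filter_upwards with t
          rw [← mul_sub, norm_mul, Real.norm_of_nonneg (φ.nonneg_normed t)]
          apply mul_le_mul_of_nonneg_left _ (φ.nonneg_normed t)
          have := hh.dist_le_mul (x - t) (y - t)
          rwa [dist_sub_right, dist_eq_norm] at this
      _ = C * dist x y := by
          rw [integral_mul_const, φ.integral_normed, one_mul]
  · intro x
    have := φ.dist_normed_convolution_le (μ := volume) (g := h) (x₀ := x) (ε := ε)
      hh.continuous.aestronglyMeasurable ?_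
    · rwa [Real.dist_eq] at this
    · intro y hy
      refine (hh.dist_le_mul y x).trans (le_trans ?_ hCr)
      apply mul_le_mul_of_nonneg_left (le_of_lt hy) C.coe_nonneg

lemma trunc_exists : ∃ (S : ℝ → ℝ) (D : NNReal), ContDiff ℝ 1 S ∧ LipschitzWith D S ∧
    (∀ s, |s| ≤ 1 → S s = s) ∧ (∀ s, 2 ≤ |s| → S s = 0) ∧ ∀ s, |S s| ≤ 2 := by
  let β : ContDiffBump (0 : ℝ) := ⟨1, 2, one_pos, one_lt_two⟩
  have hC : ContDiff ℝ 1 (fun s : ℝ => β s * s) := β.contDiff.mul contDiff_id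
  have hz : ∀ s : ℝ, 2 ≤ |s| → β s = 0 := by
    intro s hs
    apply β.zero_of_le_dist
    rw [Real.dist_eq, sub_zero]
    exact hs
  obtain ⟨D, hD⟩ := ContDiff.lipschitzWith_of_hasCompactSupport
    (β.hasCompactSupport.mul_right (f' := fun s => s)) hC (by simp)
  refine ⟨fun s => β s * s, D, hC, hD, ?_, ?_, ?_⟩
  · intro s hs
    have : β s = 1 := β.one_of_mem_closedBall (by
      rw [Metric.mem_closedBall, Real.dist_eq, sub_zero]; exact hs)
    simp [this]
  · intro s hs
    simp [hz s hs]
  · intro s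
    rcases le_total 2 |s| with h | h
    · simp [hz s h]
    · rw [abs_mul, abs_of_nonneg β.nonneg]
      nlinarith [β.le_one (x := s), β.nonneg (x := s), abs_nonneg s]

def LipF (K : Set E3) (f w : E3 → ℝ) : Prop :=
  ∃ C : ℝ, 0 ≤ C ∧ ∀ x ∈ K, ∀ y ∈ K, |w x - w y| ≤ C * (|f x - f y| + ‖x - y‖)

lemma LipF.add {K : Set E3} {f w₁ w₂ : E3 → ℝ} (h₁ : LipF K f w₁) (h₂ : LipF K f w₂) :
    LipF K f (fun x => w₁ x + w₂ x) := by
  obtain ⟨C, hC, h⟩ := h₁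
  obtain ⟨D, hD, h'⟩ := h₂
  refine ⟨C + D, by positivity, fun x hx y hy => ?_⟩
  have := abs_add_le (w₁ x - w₁ y) (w₂ x - w₂ y)
  rw [show w₁ x + w₂ x - (w₁ y + w₂ y) = (w₁ x - w₁ y) + (w₂ x - w₂ y) by ring, add_mul]
  linarith [h x hx y hy, h' x hx y hy]

lemma LipF.comp {K : Set E3} {f w : E3 → ℝ} (h₁ : LipF K f w) {T : ℝ → ℝ} {D : NNReal}
    (hT : LipschitzWith D T) : LipF K f (fun x => T (w x)) := by
  obtain ⟨C, hC, h⟩ := h₁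
  refine ⟨D * C, by positivity, fun x hx y hy => ?_⟩
  have := hT.dist_le_mul (w x) (w y)
  rw [Real.dist_eq, Real.dist_eq] at this
  refine this.trans ?_
  rw [mul_assoc]
  exact mul_le_mul_of_nonneg_left (h x hx y hy) D.coe_nonneg

lemma LipF.of_lip {K : Set E3} {f w : E3 → ℝ} {D : NNReal}
    (hT : LipschitzWith D w) : LipF K f w := by
  refine ⟨D, D.coe_nonneg, fun x hx y hy => ?_⟩
  have := hT.dist_le_mul x y
  rw [Real.dist_eq, dist_eq_norm] at this
  refine this.trans (mul_le_mul_of_nonneg_left ?_ D.coe_nonneg)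
  linarith [abs_nonneg (f x - f y)]

lemma LipF.continuousOn {K : Set E3} {f w : E3 → ℝ} (hf : ContinuousOn f K) (h : LipF K f w) :
    ContinuousOn w K := by
  obtain ⟨C, hC, h⟩ := h
  intro x hx
  have h1 : Tendsto (fun y => C * (|f y - f x| + ‖y - x‖)) (𝓝[K] x) (𝓝 0) := by
    have ha : ContinuousWithinAt (fun y => C * (|f y - f x| + ‖y - x‖)) K x := by
      have := hf x hx
      exact continuousWithinAt_const.mul
        ((this.sub continuousWithinAt_const).abs.add
          (continuousWithinAt_id.sub continuousWithinAt_const).norm)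
    have := ha.tendsto
    simpa using this
  refine tendsto_iff_dist_tendsto_zero.2 (squeeze_zero' ?_ ?_ h1)
  · exact Eventually.of_forall fun _ => dist_nonneg
  · filter_upwards [self_mem_nhdsWithin] with y hy
    exact h y hy x hx

lemma LipF.mul {K : Set E3} (hK : IsClosed K) {f w ρ : E3 → ℝ} (hf : ContinuousOn f K)
    (h : LipF K f w) (hρ : ContDiff ℝ 1 ρ) (hρc : HasCompactSupport ρ) :
    LipF K f (fun x => ρ x * w x) := by
  have hwc := h.continuousOn hf
  obtain ⟨C, hC, h⟩ := h
  obtain ⟨D, hD⟩ := ContDiff.lipschitzWith_of_hasCompactSupport hρc hρ (by simp)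
  obtain ⟨M, hM⟩ := (IsCompact.inter_right hρc hK).exists_bound_of_continuousOn
    (f := w) (hwc.mono inter_subset_right)
  obtain ⟨R, hR⟩ := hρc.exists_bound_of_continuous hρ.continuous
  have hR0 : 0 ≤ R := (norm_nonneg _).trans (hR 0)
  have key : ∀ x ∈ K, ∀ y ∈ K, ρ y ≠ 0 →
      |ρ x * w x - ρ y * w y| ≤ (R * C + |M| * D) * (|f x - f y| + ‖x - y‖) := by
    intro x hx y hy hρy
    have h1 : |w y| ≤ |M| := (hM y ⟨subset_tsupport _ hρy, hy⟩).trans (le_abs_self M)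
    have h2 := hD.dist_le_mul x y
    rw [Real.dist_eq, dist_eq_norm] at h2
    have h3 := h x hx y hy
    have h4 : |ρ x| ≤ R := hR x
    calc |ρ x * w x - ρ y * w y| = |ρ x * (w x - w y) + w y * (ρ x - ρ y)| := by
          congr 1; ring
      _ ≤ |ρ x| * |w x - w y| + |w y| * |ρ x - ρ y| := by
          rw [← abs_mul, ← abs_mul]; exact abs_add_le _ _
      _ ≤ R * (C * (|f x - f y| + ‖x - y‖)) + |M| * (D * ‖x - y‖) := by
          gcongr
      _ ≤ _ := by
          have : 0 ≤ |M| * D * |f x - f y| := by positivity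
          nlinarith
  refine ⟨R * C + |M| * D, by positivity, fun x hx y hy => ?_⟩
  by_cases hy0 : ρ y = 0
  · by_cases hx0 : ρ x = 0
    · simp only [hx0, hy0, zero_mul, sub_zero, abs_zero]
      positivity
    · have := key y hy x hx hx0
      rwa [abs_sub_comm, abs_sub_comm (f y), norm_sub_rev] at this
  · exact key x hx y hy hy0

lemma LipF.fderiv_bound {Ω : Set E3} (hΩ : IsOpen Ω) {f w : E3 → ℝ}
    (hf : ContDiffOn ℝ 1 f Ω) {M : ℝ} (hM : ∀ x ∈ Ω, ‖fderiv ℝ f x‖ ≤ M)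
    (h : LipF (closure Ω) f w) : ∃ C : ℝ, 0 ≤ C ∧ ∀ x ∈ Ω, ‖fderiv ℝ w x‖ ≤ C := by
  obtain ⟨C, hC, h⟩ := h
  refine ⟨C * (|M| + 2), by positivity, fun x hx => ?_⟩
  apply norm_fderiv_le_of_lip' ℝ (by positivity)
  have hd : HasFDerivAt f (fderiv ℝ f x) x :=
    ((hf.differentiableOn (by simp)).differentiableAt (hΩ.mem_nhds hx)).hasFDerivAt
  have h1 := hd.isLittleO.def one_pos
  filter_upwards [h1, hΩ.mem_nhds hx] with y hy hyΩ
  have h2 := h y (subset_closure hyΩ) x (subset_closure hx)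
  have h3 : |f y - f x| ≤ (|M| + 1) * ‖y - x‖ := by
    have h4 : ‖fderiv ℝ f x (y - x)‖ ≤ |M| * ‖y - x‖ :=
      (ContinuousLinearMap.le_opNorm _ _).trans
        (mul_le_mul_of_nonneg_right ((hM x hx).trans (le_abs_self M)) (norm_nonneg _))
    have h5 := norm_add_le (f y - f x - fderiv ℝ f x (y - x)) (fderiv ℝ f x (y - x))
    rw [sub_add_cancel, Real.norm_eq_abs] at h5
    linarith
  rw [Real.norm_eq_abs]
  refine h2.trans ?_
  rw [mul_assoc]
  apply mul_le_mul_of_nonneg_left _ hC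
  linarith

def PF (Ω : Set E3) (f w : E3 → ℝ) : Prop :=
  HasCompactSupport w ∧ ContDiffOn ℝ 1 w Ω ∧ LipF (closure Ω) f w

noncomputable def Lop (Ω : Set E3) (v : E3 → E3) (w : E3 → ℝ) : ℝ :=
  ∫ x in Ω, fderiv ℝ w x (v x)

lemma Lop_sm (v : E3 → E3) (hv : Measurable v) (w : E3 → ℝ) :
    StronglyMeasurable (fun x => fderiv ℝ w x (v x)) := by
  have h1 : StronglyMeasurable (fun x => fderiv ℝ w x) := (measurable_fderiv ℝ w).stronglyMeasurable
  have h2 : StronglyMeasurable v := hv.stronglyMeasurable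
  exact (isBoundedBilinearMap_apply (𝕜 := ℝ) (E := E3) (F := ℝ)).continuous.comp_stronglyMeasurable
    (h1.prodMk h2)

lemma fderiv_zero_off {w : E3 → ℝ} {x : E3} (hx : x ∉ tsupport w) : fderiv ℝ w x = 0 := by
  by_contra h
  exact hx (support_fderiv_subset ℝ h)

lemma Lop_integrable {Ω : Set E3} (hΩ : IsOpen Ω) {v : E3 → E3} (hv : Measurable v)
    {B : ℝ} (hB : ∀ x ∈ Ω, ‖v x‖ ≤ B) {w : E3 → ℝ} (hw : HasCompactSupport w) {C : ℝ}
    (hC : ∀ x ∈ Ω, ‖fderiv ℝ w x‖ ≤ C) :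
    IntegrableOn (fun x => fderiv ℝ w x (v x)) Ω := by
  have hi : Integrable ((tsupport w).indicator (fun _ => |C| * |B|)) (volume.restrict Ω) := by
    apply Integrable.mono_measure _ Measure.restrict_le_self
    rw [integrable_indicator_iff (isClosed_tsupport w).measurableSet]
    exact integrableOn_const hw.measure_lt_top.ne
  refine hi.mono' (Lop_sm v hv w).aestronglyMeasurable ?_
  filter_upwards [ae_restrict_mem hΩ.measurableSet] with x hx
  by_cases hxw : x ∈ tsupport w
  · rw [indicator_of_mem hxw]
    refine (ContinuousLinearMap.le_opNorm _ _).trans ?_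
    exact mul_le_mul ((hC x hx).trans (le_abs_self _)) ((hB x hx).trans (le_abs_self _))
      (norm_nonneg _) (abs_nonneg _)
  · rw [indicator_of_notMem hxw, fderiv_zero_off hxw]
    simp

lemma PF.add {Ω : Set E3} {f w₁ w₂ : E3 → ℝ} (h₁ : PF Ω f w₁) (h₂ : PF Ω f w₂) :
    PF Ω f (fun x => w₁ x + w₂ x) :=
  ⟨h₁.1.add h₂.1, h₁.2.1.add h₂.2.1, h₁.2.2.add h₂.2.2⟩

lemma PF.mul' {Ω : Set E3} {f w ρ : E3 → ℝ} (hf : ContinuousOn f (closure Ω))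
    (hw : ContDiffOn ℝ 1 w Ω) (h : LipF (closure Ω) f w)
    (hρ : ContDiff ℝ 1 ρ) (hρc : HasCompactSupport ρ) :
    PF Ω f (fun x => ρ x * w x) :=
  ⟨hρc.mul_right, hρ.contDiffOn.mul hw, h.mul isClosed_closure hf hρ hρc⟩

lemma Lop_congr {Ω : Set E3} (hΩ : IsOpen Ω) {v : E3 → E3} {w₁ w₂ : E3 → ℝ}
    (h : ∀ x ∈ Ω, w₁ x = w₂ x) : Lop Ω v w₁ = Lop Ω v w₂ := by
  apply setIntegral_congr_fun hΩ.measurableSet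
  intro x hx
  have : w₁ =ᶠ[𝓝 x] w₂ := by
    filter_upwards [hΩ.mem_nhds hx] with y hy using h y hy
  simp only [this.fderiv_eq]

lemma Lop_add {Ω : Set E3} (hΩ : IsOpen Ω) {v : E3 → E3} (hv : Measurable v)
    {B : ℝ} (hB : ∀ x ∈ Ω, ‖v x‖ ≤ B) {f : E3 → ℝ}
    (hf : ContDiffOn ℝ 1 f Ω) {M : ℝ} (hM : ∀ x ∈ Ω, ‖fderiv ℝ f x‖ ≤ M)
    {w₁ w₂ : E3 → ℝ} (h₁ : PF Ω f w₁) (h₂ : PF Ω f w₂) :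
    Lop Ω v (fun x => w₁ x + w₂ x) = Lop Ω v w₁ + Lop Ω v w₂ := by
  obtain ⟨C₁, -, hC₁⟩ := h₁.2.2.fderiv_bound hΩ hf hM
  obtain ⟨C₂, -, hC₂⟩ := h₂.2.2.fderiv_bound hΩ hf hM
  unfold Lop
  rw [← integral_add (Lop_integrable hΩ hv hB h₁.1 hC₁) (Lop_integrable hΩ hv hB h₂.1 hC₂)]
  apply setIntegral_congr_fun hΩ.measurableSet
  intro x hx
  have d₁ := (h₁.2.1.differentiableOn (by simp)).differentiableAt (hΩ.mem_nhds hx)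
  have d₂ := (h₂.2.1.differentiableOn (by simp)).differentiableAt (hΩ.mem_nhds hx)
  simp only [fderiv_fun_add d₁ d₂, add_apply]



def GoodV (Ω : Set E3) (v : E3 → E3) (f : E3 → ℝ) (V : Set E3) : Prop :=
  ∀ w, PF Ω f w → tsupport w ⊆ V → Lop Ω v w = 0

lemma good_union {Ω : Set E3} (hΩ : IsOpen Ω) {v : E3 → E3} (hv : Measurable v)
    {B : ℝ} (hB : ∀ x ∈ Ω, ‖v x‖ ≤ B) {f : E3 → ℝ} (hfc : ContinuousOn f (closure Ω))
    (hf : ContDiffOn ℝ 1 f Ω) {M : ℝ} (hM : ∀ x ∈ Ω, ‖fderiv ℝ f x‖ ≤ M)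
    {O₁ O₂ : Set E3} (ho₁ : IsOpen O₁) (ho₂ : IsOpen O₂)
    (h₁ : GoodV Ω v f O₁) (h₂ : GoodV Ω v f O₂) : GoodV Ω v f (O₁ ∪ O₂) := by
  intro w hw hsup
  have hQ : IsCompact (tsupport w \ O₂) := IsCompact.diff hw.1 ho₂
  obtain ⟨θ, hθ, hθc, hθs, N, hN, hQN, hN1⟩ := bump_exists hQ ho₁ (by
    rintro x ⟨hx, hx2⟩
    exact (hsup hx).resolve_right hx2)
  have hp1 : PF Ω f (fun x => θ x * w x) := PF.mul' hfc hw.2.1 hw.2.2 hθ hθc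
  have hp2 : PF Ω f (fun x => (-θ x) * w x) :=
    PF.mul' hfc hw.2.1 hw.2.2 hθ.neg hθc.neg
  have hp3 := hw.add hp2
  have e1 : Lop Ω v (fun x => θ x * w x) = 0 := by
    apply h₁ _ hp1
    exact (tsupport_mul_subset_left).trans hθs
  have e2 : Lop Ω v (fun x => w x + (-θ x) * w x) = 0 := by
    apply h₂ _ hp3
    have : tsupport (fun x => w x + (-θ x) * w x) ⊆ tsupport w ∩ Nᶜ := by
      apply closure_minimal _ ((isClosed_tsupport w).inter hN.isClosed_compl)
      intro x hx
      constructor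
      · apply subset_tsupport
        intro h0
        exact hx (by simp [h0])
      · intro hxN
        exact hx (by simp [hN1 x hxN])
    intro x hx
    obtain ⟨ha, hb⟩ := this hx
    by_contra hx2
    exact hb (hQN ⟨ha, hx2⟩)
  have := Lop_add hΩ hv hB hf hM hp1 hp3
  rw [e1, e2] at this
  rw [← add_zero (0 : ℝ), ← this]
  apply Lop_congr hΩ
  intro x _
  ring

def Vstar (Ω : Set E3) (v : E3 → E3) (f : E3 → ℝ) : Set E3 :=
  {x | ∃ r > 0, GoodV Ω v f (Metric.ball x r)}

lemma isOpen_Vstar (Ω : Set E3) (v : E3 → E3) (f : E3 → ℝ) : IsOpen (Vstar Ω v f) := by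
  rw [Metric.isOpen_iff]
  rintro x ⟨r, hr, hg⟩
  refine ⟨r, hr, fun y hy => ⟨r - dist y x, sub_pos.2 hy, fun w hw hs => hg w hw (hs.trans ?_)⟩⟩
  apply Metric.ball_subset_ball'
  linarith

lemma good_Vstar {Ω : Set E3} (hΩ : IsOpen Ω) {v : E3 → E3} (hv : Measurable v)
    {B : ℝ} (hB : ∀ x ∈ Ω, ‖v x‖ ≤ B) {f : E3 → ℝ} (hfc : ContinuousOn f (closure Ω))
    (hf : ContDiffOn ℝ 1 f Ω) {M : ℝ} (hM : ∀ x ∈ Ω, ‖fderiv ℝ f x‖ ≤ M) :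
    GoodV Ω v f (Vstar Ω v f) := by
  intro w hw hs
  choose! r hr hg using fun x (hx : x ∈ Vstar Ω v f) => hx
  obtain ⟨t, ht, htc⟩ := IsCompact.elim_nhds_subcover hw.1 (fun x => Metric.ball x (r x))
    (fun x hx => Metric.ball_mem_nhds x (hr x (hs hx)))
  have hgood : ∀ s : Finset E3, (∀ x ∈ s, x ∈ Vstar Ω v f) →
      GoodV Ω v f (⋃ x ∈ s, Metric.ball x (r x)) := by
    classical
    intro s
    induction s using Finset.induction_on with
    | empty =>
      intro _ w hw hs
      have : w = 0 := by
        rw [← tsupport_eq_empty_iff]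
        simpa using hs
      subst this
      simp [Lop]
    | insert a s ha ih =>
      intro h
      rw [Finset.set_biUnion_insert]
      exact good_union hΩ hv hB hfc hf hM Metric.isOpen_ball
        (isOpen_biUnion fun _ _ => Metric.isOpen_ball)
        (hg a (h a (Finset.mem_insert_self _ _)))
        (ih fun x hx => h x (Finset.mem_insert_of_mem hx))
  exact hgood t (fun x hx => hs (ht x hx)) w hw htc

lemma good_local {Ω : Set E3} (hΩ : IsOpen Ω) {v : E3 → E3} (hv : Measurable v)
    {B : ℝ} (hB : ∀ x ∈ Ω, ‖v x‖ ≤ B) {f : E3 → ℝ} (hfc : ContinuousOn f (closure Ω))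
    (hf : ContDiffOn ℝ 1 f Ω) {M : ℝ} (hM : ∀ x ∈ Ω, ‖fderiv ℝ f x‖ ≤ M)
    {w : E3 → ℝ} (hw : PF Ω f w) {Q : Set E3} (hQ : IsCompact Q) (hQV : Q ⊆ Vstar Ω v f)
    (hz : ∀ x ∈ Ω, x ∉ Q → w x = 0) : Lop Ω v w = 0 := by
  obtain ⟨θ, hθ, hθc, hθs, N, hN, hQN, hN1⟩ := bump_exists hQ (isOpen_Vstar Ω v f) hQV
  have hp1 : PF Ω f (fun x => θ x * w x) := PF.mul' hfc hw.2.1 hw.2.2 hθ hθc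
  rw [← good_Vstar hΩ hv hB hfc hf hM _ hp1 (tsupport_mul_subset_left.trans hθs)]
  apply Lop_congr hΩ
  intro x hx
  by_cases hxQ : x ∈ Q
  · simp [hN1 x (hQN hxQ)]
  · simp [hz x hx hxQ]

lemma good_ball_step {Ω : Set E3} (hΩ : IsOpen Ω) {v : E3 → E3} (hv : Measurable v)
    {B : ℝ} (hB : ∀ x ∈ Ω, ‖v x‖ ≤ B) {f : E3 → ℝ} (hfc : ContinuousOn f (closure Ω))
    (hf : ContDiffOn ℝ 1 f Ω) {M : ℝ} (hM : ∀ x ∈ Ω, ‖fderiv ℝ f x‖ ≤ M)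
    (hweak : ∀ ψ : E3 → ℝ, ContDiff ℝ 1 ψ → HasCompactSupport ψ → Lop Ω v ψ = 0)
    (hΩV : Ω ⊆ Vstar Ω v f) {x₀ : E3} (hx₀ : x₀ ∈ closure Ω \ Vstar Ω v f) {r : ℝ}
    {n : ℝ} (hn : 0 ≤ n)
    (hlip : ∀ x ∈ closure Ω \ Vstar Ω v f, x ∈ Metric.ball x₀ r →
      ∀ y ∈ closure Ω, |f y - f x| ≤ n * ‖y - x‖) :
    GoodV Ω v f (Metric.ball x₀ r) := by
  set K := closure Ω with hK
  set Z := K \ Vstar Ω v f with hZ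
  have hZcl : IsClosed Z := isClosed_closure.sdiff (isOpen_Vstar Ω v f)
  intro w hw hsup
  have hwc : ContinuousOn w K := hw.2.2.continuousOn hfc
  obtain ⟨Cw', hCw'0, hCw'⟩ := hw.2.2.fderiv_bound hΩ hf hM
  obtain ⟨C, hC, hwl⟩ := id hw.2.2
  obtain ⟨M₁, hM₁⟩ := (IsCompact.inter_right hw.1 isClosed_closure).exists_bound_of_continuousOn
    (f := w) (hwc.mono inter_subset_right)
  obtain ⟨ρ₀, hρ₀, hthick⟩ := IsCompact.exists_thickening_subset_open hw.1 Metric.isOpen_ball hsup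
  -- Lipschitz estimate at the points of `Z`
  obtain ⟨D, hD⟩ : ∃ D : NNReal, ∀ b ∈ Z, ∀ y ∈ K, |w y - w b| ≤ D * ‖y - b‖ := by
    have hD0 : 0 ≤ C * (n + 1) + |M₁| / ρ₀ := by positivity
    refine ⟨NNReal.mk (C * (n + 1) + |M₁| / ρ₀) hD0, fun b hb y hy => ?_⟩
    rw [NNReal.coe_mk, add_mul]
    have hp1 : 0 ≤ C * (n + 1) * ‖y - b‖ := by positivity
    have hp2 : 0 ≤ |M₁| / ρ₀ * ‖y - b‖ := by positivity
    by_cases hbU : b ∈ Metric.ball x₀ r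
    · have h1 := hwl y hy b hb.1
      have h2 := hlip b hb hbU y hy
      have h3 : C * (|f y - f b| + ‖y - b‖) ≤ C * (n * ‖y - b‖ + ‖y - b‖) := by gcongr
      linarith
    · have hwb : w b = 0 := image_eq_zero_of_notMem_tsupport fun h => hbU (hsup h)
      rw [hwb, sub_zero]
      by_cases hyw : y ∈ tsupport w
      · have h1 : |w y| ≤ |M₁| := (hM₁ y ⟨hyw, hy⟩).trans (le_abs_self _)
        have h2 : ρ₀ ≤ ‖y - b‖ := by
          by_contra hlt
          push Not at hlt
          apply hbU
          apply hthick
          rw [Metric.mem_thickening_iff]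
          exact ⟨y, hyw, by rwa [dist_comm, dist_eq_norm]⟩
        have h3 : |M₁| ≤ |M₁| / ρ₀ * ‖y - b‖ := by
          rw [div_mul_eq_mul_div, le_div_iff₀ hρ₀]
          exact mul_le_mul_of_nonneg_left h2 (abs_nonneg _)
        linarith
      · rw [image_eq_zero_of_notMem_tsupport hyw, abs_zero]
        linarith
  have hLip : LipschitzOnWith D w Z := by
    apply LipschitzOnWith.of_dist_le_mul
    intro x hx y hy
    rw [Real.dist_eq, dist_eq_norm]
    exact hD y hy x hx.1
  obtain ⟨h₀, hh₀, heq⟩ := hLip.extend_real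
  -- the strict upper Lipschitz barrier
  obtain ⟨D', h', hh', hh'Z, hh'pos⟩ : ∃ (D' : NNReal) (h' : E3 → ℝ), LipschitzWith D' h' ∧
      (∀ b ∈ Z, h' b = w b) ∧ ∀ y ∈ K, y ∉ Z → 0 < h' y - w y := by
    refine ⟨D + (2 * D + 1) * 1, fun x => h₀ x + (2 * D + 1) * Metric.infDist x Z, ?_, ?_, ?_⟩
    · apply hh₀.add
      apply LipschitzWith.of_dist_le_mul
      intro x y
      have := (Metric.lipschitz_infDist_pt Z).dist_le_mul x y
      rw [Real.dist_eq] at this ⊢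
      rw [← mul_sub, abs_mul, abs_of_nonneg (by positivity)]
      push_cast at this ⊢
      rw [mul_assoc]
      gcongr
    · intro b hb
      simp only [Metric.infDist_zero_of_mem hb, mul_zero, add_zero]
      exact (heq hb).symm
    · intro y hy hyZ
      obtain ⟨b, hb, hdist⟩ := hZcl.exists_infDist_eq_dist ⟨x₀, hx₀⟩ y
      have hpos : 0 < Metric.infDist y Z := (hZcl.notMem_iff_infDist_pos ⟨x₀, hx₀⟩).1 hyZ
      have h1 := hD b hb y hy
      have h2 := hh₀.dist_le_mul y b
      rw [Real.dist_eq] at h2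
      rw [← dist_eq_norm, ← hdist] at h1
      rw [← hdist, ← heq hb] at h2
      have h3 := (abs_le.1 h1).2
      have h4 := (abs_le.1 h2).1
      simp only
      nlinarith
  -- approximation sequence
  let δ : ℕ → ℝ := fun k => 1 / ((k : ℝ) + 1)
  have hδ : ∀ k, 0 < δ k := fun k => by positivity
  have hδlim : Tendsto δ atTop (𝓝 0) := tendsto_one_div_add_atTop_nhds_zero_nat
  choose h hhC hhL hhd using fun k => mollify hh' (half_pos (hδ k))
  obtain ⟨S, DS, hSC, hSL, hS1, hS2, hSb⟩ := trunc_exists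
  obtain ⟨ρ, hρ, hρc, -, N, hN, hQN, hN1⟩ := bump_exists hw.1 isOpen_univ (subset_univ _)
  let g : ℕ → E3 → ℝ := fun k x => w x + (- h k x)
  have hgL : ∀ k, LipF K f (g k) := fun k => hw.2.2.add (LipF.of_lip (hhL k).neg)
  have hgC : ∀ k, ContDiffOn ℝ 1 (g k) Ω := fun k => hw.2.1.add (hhC k).neg.contDiffOn
  let σ : ℕ → ℝ → ℝ := fun k s => δ k * S (s / δ k)
  have hσL : ∀ k, LipschitzWith DS (σ k) := by
    intro k
    apply LipschitzWith.of_dist_le_mul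
    intro s t
    have := hSL.dist_le_mul (s / δ k) (t / δ k)
    rw [Real.dist_eq, Real.dist_eq] at this ⊢
    simp only [σ]
    rw [← mul_sub, abs_mul, abs_of_pos (hδ k)]
    rw [← sub_div, abs_div, abs_of_pos (hδ k), mul_div_assoc', le_div_iff₀ (hδ k)] at this
    linarith
  have hσC : ∀ k, ContDiff ℝ 1 (σ k) := fun k =>
    contDiff_const.mul (hSC.comp (contDiff_id.div_const _))
  have hτL : ∀ k, LipschitzWith (1 + DS) (fun s => s + - σ k s) := fun k =>
    LipschitzWith.id.add (hσL k).neg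
  have hτC : ∀ k, ContDiff ℝ 1 (fun s => s + - σ k s) := fun k => contDiff_id.add (hσC k).neg
  have hPa : ∀ k, PF Ω f (fun x => ρ x * h k x) := fun k =>
    PF.mul' hfc (hhC k).contDiffOn (LipF.of_lip (hhL k)) hρ hρc
  have hPb : ∀ k, PF Ω f (fun x => ρ x * σ k (g k x)) := fun k =>
    PF.mul' hfc ((hσC k).comp_contDiffOn (hgC k)) ((hgL k).comp (hσL k)) hρ hρc
  have hPc : ∀ k, PF Ω f (fun x => ρ x * (g k x + - σ k (g k x))) := fun k =>
    PF.mul' hfc ((hτC k).comp_contDiffOn (hgC k)) ((hgL k).comp (hτL k)) hρ hρc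
  have hLa : ∀ k, Lop Ω v (fun x => ρ x * h k x) = 0 := fun k =>
    hweak _ (hρ.mul (hhC k)) hρc.mul_right
  have hLc : ∀ k, Lop Ω v (fun x => ρ x * (g k x + - σ k (g k x))) = 0 := by
    intro k
    have hcpt : IsCompact (tsupport ρ ∩ K) := IsCompact.inter_right hρc isClosed_closure
    have hcont : ContinuousOn (fun x => |g k x|) (tsupport ρ ∩ K) :=
      (((hgL k).continuousOn hfc).mono inter_subset_right).abs
    have hQc : IsCompact ((tsupport ρ ∩ K) ∩ (fun x => |g k x|) ⁻¹' Ici (δ k)) :=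
      hcpt.of_isClosed_subset (hcont.preimage_isClosed_of_isClosed hcpt.isClosed isClosed_Ici)
        inter_subset_left
    apply good_local hΩ hv hB hfc hf hM (hPc k) hQc
    · rintro x ⟨⟨-, hxK⟩, hx⟩
      by_contra hxV
      have hxZ : x ∈ Z := ⟨hxK, hxV⟩
      have h1 := hhd k x
      rw [hh'Z x hxZ] at h1
      have h2 : δ k ≤ |g k x| := hx
      have h3 : |g k x| = |h k x - w x| := by
        rw [abs_sub_comm]; simp only [g]; rw [sub_eq_add_neg]
      linarith [hδ k]
    · intro x hx hxQ
      by_cases hxρ : x ∈ tsupport ρ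
      · have h1 : |g k x| < δ k := by
          by_contra hcon
          push Not at hcon
          exact hxQ ⟨⟨hxρ, subset_closure hx⟩, hcon⟩
        have h2 : S (g k x / δ k) = g k x / δ k := by
          apply hS1
          rw [abs_div, abs_of_pos (hδ k), div_le_one (hδ k)]
          exact h1.le
        have h3 : σ k (g k x) = g k x := by
          simp only [σ]
          rw [h2, mul_div_cancel₀ _ (hδ k).ne']
        simp [h3]
      · simp [image_eq_zero_of_notMem_tsupport hxρ]
  have hsplit : ∀ k, Lop Ω v w = Lop Ω v (fun x => ρ x * σ k (g k x)) := by
    intro k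
    have e1 := Lop_add hΩ hv hB hf hM (hPa k) ((hPb k).add (hPc k))
    have e2 := Lop_add hΩ hv hB hf hM (hPb k) (hPc k)
    rw [e2, hLa, hLc, zero_add, add_zero] at e1
    rw [← e1]
    apply Lop_congr hΩ
    intro x _
    simp only [g]
    by_cases hxw : x ∈ tsupport w
    · rw [hN1 x (hQN hxw)]; ring
    · rw [image_eq_zero_of_notMem_tsupport hxw]; ring
  -- passage to the limit
  obtain ⟨R, hR⟩ := hρc.exists_bound_of_continuous hρ.continuous
  have hR0 : 0 ≤ R := (norm_nonneg _).trans (hR 0)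
  obtain ⟨Dρ, hDρ⟩ := ContDiff.lipschitzWith_of_hasCompactSupport hρc hρ (by simp)
  have hderiv : ∀ k, ∀ x ∈ Ω, fderiv ℝ (fun x => ρ x * σ k (g k x)) x =
      ρ x • (deriv S (g k x / δ k) • fderiv ℝ (g k) x) + σ k (g k x) • fderiv ℝ ρ x := by
    intro k x hx
    have dg : HasFDerivAt (g k) (fderiv ℝ (g k) x) x :=
      (((hgC k).differentiableOn (by simp)).differentiableAt (hΩ.mem_nhds hx)).hasFDerivAt
    have dρ : HasFDerivAt ρ (fderiv ℝ ρ x) x := (hρ.differentiable (by simp) x).hasFDerivAt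
    have dσ : HasDerivAt (σ k) (deriv S (g k x / δ k)) (g k x) := by
      have hs : HasDerivAt S (deriv S (g k x / δ k)) (g k x / δ k) :=
        (hSC.differentiable (by simp) _).hasDerivAt
      have hd : HasDerivAt (fun s : ℝ => s / δ k) (1 / δ k) (g k x) :=
        (hasDerivAt_id _).div_const _
      have := (hs.comp (g k x) hd).const_mul (δ k)
      rw [mul_one_div, mul_div_cancel₀ _ (hδ k).ne'] at this
      exact this
    exact (dρ.mul (dσ.comp_hasFDerivAt x dg)).fderiv
  have hlim : Tendsto (fun k => Lop Ω v (fun x => ρ x * σ k (g k x))) atTop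
      (𝓝 (∫ x in Ω, (0 : ℝ))) := by
    let Cb : ℝ := R * (DS * (Cw' + D')) + 2 * Dρ
    have hCb : 0 ≤ Cb := by positivity
    apply tendsto_integral_of_dominated_convergence
      ((tsupport ρ).indicator (fun _ => Cb * |B|))
    · intro k
      exact (Lop_sm v hv _).aestronglyMeasurable
    · apply Integrable.mono_measure _ Measure.restrict_le_self
      rw [integrable_indicator_iff (isClosed_tsupport ρ).measurableSet]
      exact integrableOn_const hρc.measure_lt_top.ne
    · intro k
      filter_upwards [ae_restrict_mem hΩ.measurableSet] with x hx
      by_cases hxρ : x ∈ tsupport ρ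
      · rw [indicator_of_mem hxρ]
        refine (ContinuousLinearMap.le_opNorm _ _).trans ?_
        refine mul_le_mul ?_ ((hB x hx).trans (le_abs_self _)) (norm_nonneg _) hCb
        rw [hderiv k x hx]
        have n1 : ‖deriv S (g k x / δ k)‖ ≤ DS := norm_deriv_le_of_lipschitz hSL
        have n2 : ‖fderiv ℝ (g k) x‖ ≤ Cw' + D' := by
          have dw := (hw.2.1.differentiableOn (by simp)).differentiableAt (hΩ.mem_nhds hx)
          have dh : DifferentiableAt ℝ (h k) x := (hhC k).differentiable (by simp) x
          have : fderiv ℝ (g k) x = fderiv ℝ w x - fderiv ℝ (h k) x := by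
            have := (dw.hasFDerivAt.add dh.hasFDerivAt.neg).fderiv
            rw [sub_eq_add_neg]
            exact this
          rw [this]
          exact (norm_sub_le _ _).trans
            (add_le_add (hCw' x hx) (norm_fderiv_le_of_lipschitz ℝ (hhL k)))
        have n3 : ‖σ k (g k x)‖ ≤ 2 := by
          simp only [σ]
          rw [norm_mul, Real.norm_eq_abs, Real.norm_eq_abs, abs_of_pos (hδ k)]
          have : δ k ≤ 1 := by
            simp only [δ]
            rw [div_le_one (by positivity)]
            linarith [(Nat.cast_nonneg k : (0 : ℝ) ≤ k)]
          nlinarith [hSb (g k x / δ k), abs_nonneg (S (g k x / δ k)), hδ k]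
        have n4 : ‖fderiv ℝ ρ x‖ ≤ Dρ := norm_fderiv_le_of_lipschitz ℝ hDρ
        refine (norm_add_le _ _).trans ?_
        rw [norm_smul, norm_smul, norm_smul]
        have := hR x
        simp only [Cb]
        gcongr
      · rw [indicator_of_notMem hxρ, fderiv_zero_off]
        · simp
        · exact fun hx' => hxρ (tsupport_mul_subset_left hx')
    · filter_upwards [ae_restrict_mem hΩ.measurableSet] with x hx
      have hpos : 0 < h' x - w x := hh'pos x (subset_closure hx) (fun hxZ => hxZ.2 (hΩV hx))
      apply tendsto_const_nhds.congr'
      have hev : ∀ᶠ k in atTop, δ k < (h' x - w x) / 3 :=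
        hδlim.eventually_lt_const (by positivity)
      filter_upwards [hev] with k hk
      have h1 := abs_le.1 (hhd k x)
      have h2 : 2 < |g k x / δ k| := by
        rw [abs_div, abs_of_pos (hδ k), lt_div_iff₀ (hδ k)]
        have : -(g k x) ≤ |g k x| := neg_le_abs _
        simp only [g] at this ⊢
        linarith [h1.1, h1.2, hδ k]
      have h3 : S (g k x / δ k) = 0 := hS2 _ h2.le
      have h4 : deriv S (g k x / δ k) = 0 := by
        have : S =ᶠ[𝓝 (g k x / δ k)] fun _ => (0 : ℝ) := by
          filter_upwards [(isOpen_lt continuous_const continuous_abs).mem_nhds h2] with s hs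
          exact hS2 s (le_of_lt hs)
        rw [this.deriv_eq]
        simp
      rw [hderiv k x hx, h4]
      simp [σ, h3]
  have hconst : (fun k => Lop Ω v (fun x => ρ x * σ k (g k x))) = fun _ => Lop Ω v w :=
    funext fun k => (hsplit k).symm
  rw [hconst] at hlim
  simpa using tendsto_nhds_unique tendsto_const_nhds hlim

theorem test_extension {Ω : Set E3} (hΩ : IsOpen Ω) {v : E3 → E3} (hv : Measurable v)
    {B : ℝ} (hB : ∀ x ∈ Ω, ‖v x‖ ≤ B) {f : E3 → ℝ} (hfcs : HasCompactSupport f)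
    (hfd : DifferentiableOn ℝ f (closure Ω))
    (hf : ContDiffOn ℝ 1 f Ω) {M : ℝ} (hM : ∀ x ∈ Ω, ‖fderiv ℝ f x‖ ≤ M)
    (hweak : ∀ ψ : E3 → ℝ, ContDiff ℝ 1 ψ → HasCompactSupport ψ → Lop Ω v ψ = 0) :
    Lop Ω v f = 0 := by
  have hfc : ContinuousOn f (closure Ω) := hfd.continuousOn
  have hPf : PF Ω f f := ⟨hfcs, hf, 1, zero_le_one, fun x _ y _ => by
    linarith [norm_nonneg (x - y)]⟩
  have hΩV : Ω ⊆ Vstar Ω v f := by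
    intro x hx
    obtain ⟨r, hr, hball⟩ := Metric.isOpen_iff.1 hΩ x hx
    refine ⟨r, hr, fun w hw hs => hweak w ?_ hw.1⟩
    rw [contDiff_iff_contDiffAt]
    intro y
    by_cases hy : y ∈ tsupport w
    · exact hw.2.1.contDiffAt (hΩ.mem_nhds (hball (hs hy)))
    · exact contDiffAt_const.congr_of_eventuallyEq (notMem_tsupport_iff_eventuallyEq.1 hy)
  obtain ⟨M₁, hM₁⟩ := (IsCompact.inter_right hfcs isClosed_closure).exists_bound_of_continuousOn
    (f := f) (hfc.mono inter_subset_right)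
  have hbd : ∀ x ∈ closure Ω, |f x| ≤ |M₁| := by
    intro x hx
    by_cases hxs : x ∈ tsupport f
    · exact (hM₁ x ⟨hxs, hx⟩).trans (le_abs_self _)
    · rw [image_eq_zero_of_notMem_tsupport hxs]; simp
  have hcov : closure Ω ⊆ Vstar Ω v f := by
    by_contra hcon
    obtain ⟨x₁, hx₁, hx₁V⟩ := not_subset.1 hcon
    set Z := closure Ω \ Vstar Ω v f with hZ
    have hZcl : IsClosed Z := isClosed_closure.sdiff (isOpen_Vstar Ω v f)
    have : Nonempty Z := ⟨⟨x₁, hx₁, hx₁V⟩⟩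
    have : CompleteSpace Z := hZcl.isComplete.completeSpace_coe
    let F : ℕ → Set Z := fun n => {x | ∀ y ∈ closure Ω, |f y - f x| ≤ n * ‖y - x‖}
    have hFcl : ∀ n, IsClosed (F n) := by
      intro n
      have : F n = ⋂ y ∈ closure Ω, {x : Z | |f y - f x| ≤ n * ‖y - x‖} := by
        ext x; simp [F]
      rw [this]
      refine isClosed_biInter fun y _ => ?_
      have hcf : Continuous (fun x : Z => f x) :=
        (hfc.mono sdiff_subset).domRestrict
      exact isClosed_le (continuous_const.sub hcf).abs
        (continuous_const.mul (continuous_const.sub continuous_subtype_val).norm)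
    have hFU : ⋃ n, F n = univ := by
      rw [eq_univ_iff_forall]
      rintro ⟨x, hx⟩
      obtain ⟨c, hc⟩ := ((hfd x hx.1).hasFDerivWithinAt.isBigO_sub).bound
      rw [eventually_nhdsWithin_iff, Metric.eventually_nhds_iff] at hc
      obtain ⟨ε, hε, hc⟩ := hc
      obtain ⟨n, hn⟩ := exists_nat_ge (|c| + 2 * |M₁| / ε)
      rw [mem_iUnion]
      refine ⟨n, fun y hy => ?_⟩
      refine le_trans ?_ (mul_le_mul_of_nonneg_right hn (norm_nonneg _))
      have hp1 : 0 ≤ |c| * ‖y - x‖ := by positivity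
      have hp2 : 0 ≤ 2 * |M₁| / ε * ‖y - x‖ := by positivity
      simp only
      rw [add_mul]
      by_cases hyx : dist y x < ε
      · have h1 := hc hyx hy
        have h2 : c * ‖y - x‖ ≤ |c| * ‖y - x‖ :=
          mul_le_mul_of_nonneg_right (le_abs_self c) (norm_nonneg _)
        rw [Real.norm_eq_abs] at h1
        linarith
      · push Not at hyx
        rw [dist_eq_norm] at hyx
        have h1 : |f y - f x| ≤ |f y| + |f x| := abs_sub _ _
        have h2 : 2 * |M₁| ≤ 2 * |M₁| / ε * ‖y - x‖ := by
          rw [div_mul_eq_mul_div, le_div_iff₀ hε]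
          exact mul_le_mul_of_nonneg_left hyx (by positivity)
        linarith [hbd y hy, hbd x hx.1]
    obtain ⟨n, x₀, hx₀⟩ := nonempty_interior_of_iUnion_of_closed hFcl hFU
    rw [mem_interior_iff_mem_nhds, Metric.mem_nhds_iff] at hx₀
    obtain ⟨r, hr, hball⟩ := hx₀
    apply x₀.2.2
    refine ⟨r, hr, good_ball_step hΩ hv hB hfc hf hM hweak hΩV x₀.2 (n := n)
      (Nat.cast_nonneg n) ?_⟩
    intro x hx hxb y hy
    exact hball (show (⟨x, hx⟩ : Z) ∈ Metric.ball x₀ r from hxb) y hy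
  apply good_local hΩ hv hB hfc hf hM hPf (IsCompact.inter_right hfcs isClosed_closure)
    (inter_subset_right.trans hcov)
  intro x hx hxQ
  apply image_eq_zero_of_notMem_tsupport
  exact fun h => hxQ ⟨h, subset_closure hx⟩


lemma slice_integral {Ω : Set E3} (hΩ : MeasurableSet Ω) {F : E3 → ℝ} (hF : IntegrableOn F Ω) :
    ∫ x in Ω, F x = ∫ t : ℝ, ∫ x' in crossSection Ω t, F (Fin.snoc x' t : E3) ∧
    Integrable (fun t : ℝ => ∫ x' in crossSection Ω t, F (Fin.snoc x' t : E3)) := by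
  let e := MeasurableEquiv.piFinSuccAbove (fun _ : Fin 3 => ℝ) (Fin.last 2)
  have he : MeasurePreserving e volume volume :=
    volume_preserving_piFinSuccAbove (fun _ : Fin 3 => ℝ) (Fin.last 2)
  have hes : ∀ (t : ℝ) (x' : Fin 2 → ℝ), e.symm (t, x') = (Fin.snoc x' t : E3) := by
    intro t x'
    exact Fin.insertNth_last' t x'
  have hsn : ∀ t : ℝ, Measurable (fun x' : Fin 2 → ℝ => (Fin.snoc x' t : E3)) := by
    intro t
    have : (fun x' : Fin 2 → ℝ => (Fin.snoc x' t : E3)) = fun x' => e.symm (t, x') := by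
      ext1 x'; exact (hes t x').symm
    rw [this]
    exact e.symm.measurable.comp (measurable_const.prodMk measurable_id)
  have hcs : ∀ t, MeasurableSet (crossSection Ω t) := fun t => (hsn t) hΩ
  have hI : Integrable (Ω.indicator F) := (integrable_indicator_iff hΩ).2 hF
  have hI2 : Integrable (fun z : ℝ × (Fin 2 → ℝ) => Ω.indicator F (e.symm z))
      (volume.prod volume) :=
    (he.symm e).integrable_comp_of_integrable hI
  have hind : ∀ t, ∫ x' : Fin 2 → ℝ, Ω.indicator F (e.symm (t, x')) =
      ∫ x' in crossSection Ω t, F (Fin.snoc x' t : E3) := by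
    intro t
    rw [← integral_indicator (hcs t)]
    congr 1
    ext1 x'
    rw [hes]
    by_cases hx : (Fin.snoc x' t : E3) ∈ Ω
    · rw [indicator_of_mem hx, indicator_of_mem (show x' ∈ crossSection Ω t from hx)]
    · rw [indicator_of_notMem hx, indicator_of_notMem (show x' ∉ crossSection Ω t from hx)]
  constructor
  · rw [← integral_indicator hΩ, ← (he.symm e).integral_comp e.symm.measurableEmbedding]
    refine (integral_prod _ hI2).trans ?_
    simp only [hind]
  · have := hI2.integral_prod_left
    simpa only [hind] using this

lemma continuous_snoc3 (t : ℝ) : Continuous (fun x' : Fin 2 → ℝ => (Fin.snoc x' t : E3)) := by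
  apply continuous_pi
  intro i
  refine Fin.lastCases ?_ (fun j => ?_) i
  · change Continuous fun x' : Fin 2 → ℝ => (Fin.snoc x' t : E3) (Fin.last 2)
    simp only [Fin.snoc_last]
    exact continuous_const
  · simpa using continuous_apply j

lemma snoc3_two (x' : Fin 2 → ℝ) (t : ℝ) : (Fin.snoc x' t : E3) 2 = t :=
  Fin.snoc_last (α := fun _ => ℝ) t x'

def slab (C₀ R : ℝ) : Set E3 := Icc ![-C₀, -C₀, -R] ![C₀, C₀, R]

lemma mem_slab {C₀ R : ℝ} (hC₀ : 0 < C₀) {x : E3} (hx : (x 0) ^ 2 + (x 1) ^ 2 < C₀ ^ 2)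
    (hR : |x 2| ≤ R) : x ∈ slab C₀ R := by
  have h0 : |x 0| ≤ C₀ := abs_le_of_sq_le_sq (by nlinarith [sq_nonneg (x 1)]) hC₀.le
  have h1 : |x 1| ≤ C₀ := abs_le_of_sq_le_sq (by nlinarith [sq_nonneg (x 0)]) hC₀.le
  rw [abs_le] at h0 h1 hR
  constructor
  · intro i
    fin_cases i
    · exact h0.1
    · exact h1.1
    · exact hR.1
  · intro i
    fin_cases i
    · exact h0.2
    · exact h1.2
    · exact hR.2

lemma slab_volume {C₀ R : ℝ} (hC₀ : 0 < C₀) (hR : 0 < R) :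
    (volume (slab C₀ R)).toReal = 8 * C₀ ^ 2 * R := by
  unfold slab
  rw [Real.volume_Icc_pi_toReal]
  · simp [Fin.prod_univ_three]
    ring
  · intro i
    fin_cases i
    · exact (by linarith : -C₀ ≤ C₀)
    · exact (by linarith : -C₀ ≤ C₀)
    · exact (by linarith : -R ≤ R)

lemma slab_integrable {C₀ : ℝ} (hC₀ : 0 < C₀) {Ω : Set E3} (hΩ : MeasurableSet Ω)
    (hΩbdd : Ω ⊆ {x | (x 0) ^ 2 + (x 1) ^ 2 < C₀ ^ 2}) {F : E3 → ℝ}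
    (hF : AEStronglyMeasurable F (volume.restrict Ω)) {c R : ℝ} (hR : 0 < R)
    (hc : ∀ x ∈ Ω, |F x| ≤ c) (hz : ∀ x ∈ Ω, R < |x 2| → F x = 0) :
    IntegrableOn F Ω ∧ ∫ x in Ω, F x ≤ |c| * (8 * C₀ ^ 2 * R) := by
  have hms : MeasurableSet (slab C₀ R) := measurableSet_Icc
  have hfin : volume (slab C₀ R) < ⊤ := isCompact_Icc.measure_lt_top
  have hi0 : Integrable ((slab C₀ R).indicator (fun _ => |c|)) :=
    (integrable_indicator_iff hms).2 (integrableOn_const hfin.ne)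
  have hi : Integrable ((slab C₀ R).indicator (fun _ => |c|)) (volume.restrict Ω) :=
    hi0.mono_measure Measure.restrict_le_self
  have hle : ∀ᵐ x ∂(volume.restrict Ω), ‖F x‖ ≤ (slab C₀ R).indicator (fun _ => |c|) x := by
    filter_upwards [ae_restrict_mem hΩ] with x hx
    by_cases hxR : |x 2| ≤ R
    · rw [indicator_of_mem (mem_slab hC₀ (hΩbdd hx) hxR)]
      exact (hc x hx).trans (le_abs_self c)
    · rw [hz x hx (not_le.1 hxR), norm_zero]
      exact indicator_nonneg (fun _ _ => abs_nonneg c) x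
  refine ⟨hi.mono' hF hle, ?_⟩
  calc ∫ x in Ω, F x ≤ ‖∫ x in Ω, F x‖ := le_abs_self _
    _ ≤ ∫ x in Ω, (slab C₀ R).indicator (fun _ => |c|) x := norm_integral_le_of_norm_le hi hle
    _ ≤ ∫ x, (slab C₀ R).indicator (fun _ => |c|) x := by
        apply integral_mono_measure Measure.restrict_le_self _ hi0
        exact Eventually.of_forall fun x => indicator_nonneg (fun _ _ => abs_nonneg c) x
    _ = |c| * (8 * C₀ ^ 2 * R) := by
        rw [integral_indicator hms, setIntegral_const, smul_eq_mul, Measure.real,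
          slab_volume hC₀ hR, mul_comm]

lemma cutoff_exists : ∃ (χ : ℝ → ℝ) (C₁ : ℝ), ContDiff ℝ 1 χ ∧ 0 ≤ C₁ ∧ (∀ s, |deriv χ s| ≤ C₁) ∧
    (∀ s, |s| ≤ 1 → χ s = 1) ∧ (∀ s, 2 < |s| → χ s = 0) ∧ (∀ s, 2 < |s| → deriv χ s = 0) ∧
    (∀ s, 0 ≤ χ s) ∧ (∀ s, χ s ≤ 1) := by
  let β : ContDiffBump (0 : ℝ) := ⟨1, 2, one_pos, one_lt_two⟩
  have hz : ∀ s : ℝ, 2 < |s| → β s = 0 := by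
    intro s hs
    apply β.zero_of_le_dist
    rw [Real.dist_eq, sub_zero]
    exact hs.le
  obtain ⟨D, hD⟩ := ContDiff.lipschitzWith_of_hasCompactSupport
    β.hasCompactSupport (β.contDiff (n := 1)) (by simp)
  refine ⟨β, D, β.contDiff, D.coe_nonneg, ?_, ?_, hz, ?_, fun s => β.nonneg, fun s => β.le_one⟩
  · intro s
    exact norm_deriv_le_of_lipschitz hD
  · intro s hs
    exact β.one_of_mem_closedBall (by
      rw [Metric.mem_closedBall, Real.dist_eq, sub_zero]; exact hs)
  · intro s hs
    have : (β : ℝ → ℝ) =ᶠ[𝓝 s] fun _ => (0 : ℝ) := by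
      filter_upwards [(isOpen_lt continuous_const continuous_abs).mem_nhds hs] with u hu
      exact hz u hu
    rw [this.deriv_eq]
    simp

lemma fderiv_eq_sum (ψ : E3 → ℝ) (x u : E3) :
    fderiv ℝ ψ x u = ∑ i, u i * grad3 ψ x i := by
  conv_lhs => rw [pi_eq_sum_univ' u]
  rw [map_sum]
  simp only [map_smul, smul_eq_mul]
  apply Finset.sum_congr rfl
  intro i _
  unfold grad3
  congr 2

lemma entry_bound {lam Lam : ℝ} (hlam : 0 < lam) {a : Fin 3 → Fin 3 → ℝ}
    (hs : ∀ i j, a i j = a j i)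
    (h : ∀ ξ : Fin 3 → ℝ, lam * normSq3 ξ ≤ ∑ i, ∑ j, ξ i * a i j * ξ j ∧
      ∑ i, ∑ j, ξ i * a i j * ξ j ≤ Lam * normSq3 ξ) (i j : Fin 3) : |a i j| ≤ Lam := by
  simp only [normSq3, Fin.sum_univ_three] at h
  have e0 := h ![1, 0, 0]
  have e1 := h ![0, 1, 0]
  have e2 := h ![0, 0, 1]
  have p01 := h ![1, 1, 0]
  have p02 := h ![1, 0, 1]
  have p12 := h ![0, 1, 1]
  have m01 := h ![1, -1, 0]
  have m02 := h ![1, 0, -1]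
  have m12 := h ![0, 1, -1]
  have s01 := hs 0 1
  have s02 := hs 0 2
  have s12 := hs 1 2
  simp at e0 e1 e2 p01 p02 p12 m01 m02 m12
  rw [abs_le]
  fin_cases i <;> fin_cases j <;> simp <;> constructor <;> linarith


lemma section_est {α : Type*} [MeasurableSpace α] {μ : Measure α} [IsFiniteMeasure μ]
    {φ q G : α → ℝ} (hφm : AEStronglyMeasurable φ μ) (hqm : AEStronglyMeasurable q μ)
    (hGm : AEStronglyMeasurable G μ) {a b c : ℝ} (hφb : ∀ᵐ x ∂μ, ‖φ x‖ ≤ a)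
    (hqb : ∀ᵐ x ∂μ, ‖q x‖ ≤ b) (hGb : ∀ᵐ x ∂μ, ‖G x‖ ≤ c) {k l m : ℝ}
    (hqG : ∀ᵐ x ∂μ, q x ^ 2 ≤ k * G x) (h0 : ∫ x, q x ∂μ = 0)
    (hP : ∫ x, (φ x - m) ^ 2 ∂μ ≤ l ^ 2 * ∫ x, G x ∂μ) :
    |∫ x, φ x * q x ∂μ| ≤ (l ^ 2 / 2 + k / 2) * ∫ x, G x ∂μ := by
  have hGi : Integrable G μ := Integrable.of_bound hGm c hGb
  have hqi : Integrable q μ := Integrable.of_bound hqm b hqb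
  have hdm : AEStronglyMeasurable (fun x => φ x - m) μ := hφm.sub aestronglyMeasurable_const
  have hdb : ∀ᵐ x ∂μ, ‖φ x - m‖ ≤ a + ‖m‖ := by
    filter_upwards [hφb] with x hx
    exact (norm_sub_le _ _).trans (by linarith)
  have hdi2 : Integrable (fun x => (φ x - m) ^ 2) μ := by
    refine Integrable.of_bound (hdm.pow 2) ((a + ‖m‖) ^ 2) ?_
    filter_upwards [hdb] with x hx
    rw [norm_pow]
    exact pow_le_pow_left₀ (norm_nonneg _) hx 2
  have hdqi : Integrable (fun x => (φ x - m) * q x) μ := by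
    refine Integrable.of_bound (hdm.mul hqm) ((a + ‖m‖) * b) ?_
    filter_upwards [hdb, hqb] with x hx hx'
    rw [norm_mul]
    exact mul_le_mul hx hx' (norm_nonneg _) ((norm_nonneg _).trans hx)
  have e1 : ∫ x, φ x * q x ∂μ = ∫ x, (φ x - m) * q x ∂μ := by
    have : ∫ x, φ x * q x ∂μ = ∫ x, ((φ x - m) * q x + m * q x) ∂μ := by
      congr 1; ext1 x; ring
    rw [this, integral_add hdqi (hqi.const_mul m), integral_const_mul, h0, mul_zero, add_zero]
  rw [e1]
  calc |∫ x, (φ x - m) * q x ∂μ|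
      ≤ ∫ x, ((1 / 2) * (φ x - m) ^ 2 + (k / 2) * G x) ∂μ := by
        rw [← Real.norm_eq_abs]
        apply norm_integral_le_of_norm_le ((hdi2.const_mul _).add (hGi.const_mul _))
        filter_upwards [hqG] with x hx
        simp only [Pi.add_apply]
        rw [Real.norm_eq_abs, abs_le]
        constructor <;> nlinarith [sq_nonneg (φ x - m - q x), sq_nonneg (φ x - m + q x)]
    _ = (1 / 2) * ∫ x, (φ x - m) ^ 2 ∂μ + (k / 2) * ∫ x, G x ∂μ := by
        rw [integral_add (hdi2.const_mul _) (hGi.const_mul _), integral_const_mul,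
          integral_const_mul]
    _ ≤ _ := by linarith

/-- The energy in the slab. -/
noncomputable def Eng (Ω : Set E3) (G : E3 → ℝ) (R : ℝ) : ℝ :=
  ∫ x in Ω, (Icc (-R) R).indicator (fun _ => (1 : ℝ)) (x 2) * G x

lemma ind_le_one (R t : ℝ) : (Icc (-R) R).indicator (fun _ => (1 : ℝ)) t ≤ 1 :=
  indicator_le_self' (fun _ _ => zero_le_one) t

lemma ind_nonneg (R t : ℝ) : 0 ≤ (Icc (-R) R).indicator (fun _ => (1 : ℝ)) t :=
  indicator_nonneg (fun _ _ => zero_le_one) t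

lemma ind_zero {R t : ℝ} (h : R < |t|) : (Icc (-R) R).indicator (fun _ => (1 : ℝ)) t = 0 := by
  apply indicator_of_notMem
  intro hm
  exact absurd (abs_le.2 hm) (not_le.2 h)

lemma ind_one {R t : ℝ} (h : |t| ≤ R) : (Icc (-R) R).indicator (fun _ => (1 : ℝ)) t = 1 :=
  indicator_of_mem (show t ∈ Icc (-R) R from abs_le.1 h) _

lemma ind_meas (R : ℝ) :
    Measurable (fun x : E3 => (Icc (-R) R).indicator (fun _ => (1 : ℝ)) (x 2)) :=
  (measurable_const.indicator measurableSet_Icc).comp (measurable_pi_apply 2)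

lemma Eng_integrable {C₀ : ℝ} (hC₀ : 0 < C₀) {Ω : Set E3} (hΩ : MeasurableSet Ω)
    (hΩbdd : Ω ⊆ {x | (x 0) ^ 2 + (x 1) ^ 2 < C₀ ^ 2}) {G : E3 → ℝ} (hG : Measurable G)
    {c : ℝ} (hc : ∀ x ∈ Ω, |G x| ≤ c) {R : ℝ} (hR : 0 < R) :
    IntegrableOn (fun x => (Icc (-R) R).indicator (fun _ => (1 : ℝ)) (x 2) * G x) Ω ∧
    Eng Ω G R ≤ |c| * (8 * C₀ ^ 2 * R) := by
  refine slab_integrable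
    (F := fun x => (Icc (-R) R).indicator (fun _ => (1 : ℝ)) (x 2) * G x) hC₀ hΩ hΩbdd
    ((ind_meas R).mul hG).aestronglyMeasurable hR ?_ ?_
  · intro x hx
    rw [abs_mul, abs_of_nonneg (ind_nonneg _ _)]
    have := hc x hx
    have h1 := ind_le_one R (x 2)
    have h2 := ind_nonneg R (x 2)
    nlinarith [abs_nonneg (G x)]
  · intro x _ hx
    rw [ind_zero hx, zero_mul]

lemma energy_ineq {C₀ Λ₀ lam k M B : ℝ} (hC₀ : 0 < C₀)
    {Ω : Set E3} (hΩ : IsOpen Ω)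
    (hΩbdd : Ω ⊆ {x | (x 0) ^ 2 + (x 1) ^ 2 < C₀ ^ 2})
    (hSigma : ∀ t : ℝ, volume (crossSection Ω t) < ⊤)
    {Φ : E3 → ℝ} (hΦ : ContDiffOn ℝ 1 Φ (closure Ω))
    (hP : ∀ t : ℝ, ∫ x' in crossSection Ω t,
          (Φ (Fin.snoc x' t)
            - (∫ y' in crossSection Ω t, Φ (Fin.snoc y' t)) /
              (volume (crossSection Ω t)).toReal) ^ 2
        ≤ Λ₀ ^ 2 * ∫ x' in crossSection Ω t, normSq3 (grad3 Φ (Fin.snoc x' t)))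
    {v : E3 → E3} (hv : Measurable v) (hB : ∀ x ∈ Ω, ‖v x‖ ≤ B)
    (hM : ∀ x ∈ Ω, ‖fderiv ℝ Φ x‖ ≤ M) {G : E3 → ℝ} (hGdef : G = fun x => normSq3 (grad3 Φ x))
    (hG : Measurable G) {c : ℝ} (hc : ∀ x ∈ Ω, |G x| ≤ c) (hG0 : ∀ x, 0 ≤ G x)
    (hlam : 0 < lam)
    (hell : ∀ x ∈ Ω, lam * G x ≤ fderiv ℝ Φ x (v x))
    (hq : ∀ x ∈ Ω, v x 2 ^ 2 ≤ k * G x)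
    (hweak : ∀ ψ : E3 → ℝ, ContDiff ℝ 1 ψ → HasCompactSupport ψ → Lop Ω v ψ = 0)
    (hflux : ∀ t : ℝ, ∫ x' in crossSection Ω t, v (Fin.snoc x' t : E3) 2 = 0)
    {χ : ℝ → ℝ} {C₁ : ℝ} (hχ : ContDiff ℝ 1 χ) (hC₁ : ∀ s, |deriv χ s| ≤ C₁)
    (hχ1 : ∀ s, |s| ≤ 1 → χ s = 1) (hχ2 : ∀ s, 2 < |s| → χ s = 0)
    (hχ3 : ∀ s, 2 < |s| → deriv χ s = 0) (hχ4 : ∀ s, 0 ≤ χ s) (hχ5 : ∀ s, χ s ≤ 1)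
    {R : ℝ} (hR : 0 < R) :
    lam * Eng Ω G R ≤ (C₁ / R * (Λ₀ ^ 2 / 2 + k / 2)) * Eng Ω G (2 * R) := by
  have hΩm := hΩ.measurableSet
  have hC₁0 : 0 ≤ C₁ := (abs_nonneg _).trans (hC₁ 0)
  have hΦΩ : ContDiffOn ℝ 1 Φ Ω := hΦ.mono subset_closure
  have habs : ∀ t : ℝ, |t / R| = |t| / R := fun t => by rw [abs_div, abs_of_pos hR]
  -- the cutoff
  obtain ⟨θ, hθ, hθc, -, N, hN, hQN, hN1⟩ :=
    bump_exists (Q := slab C₀ (2 * R)) isCompact_Icc isOpen_univ (subset_univ _)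
  let ζ : E3 → ℝ := fun x => χ (x 2 / R)
  have hζ : ContDiff ℝ 1 ζ := hχ.comp ((contDiff_apply ℝ ℝ (2 : Fin 3)).div_const R)
  let Ψ : E3 → ℝ := fun x => θ x * ζ x
  have hΨ : ContDiff ℝ 1 Ψ := hθ.mul hζ
  have hΨc : HasCompactSupport Ψ := hθc.mul_right
  have hΨΩ : ∀ x ∈ Ω, Ψ x = ζ x := by
    intro x hx
    by_cases h2 : |x 2| ≤ 2 * R
    · simp only [Ψ]
      rw [hN1 x (hQN (mem_slab hC₀ (hΩbdd hx) h2)), one_mul]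
    · have : ζ x = 0 := by
        apply hχ2
        rw [habs, lt_div_iff₀ hR]
        exact not_le.1 h2
      simp [Ψ, this]
  have hfd : ∀ x ∈ Ω, HasFDerivAt (fun x => Ψ x * Φ x)
      (Ψ x • fderiv ℝ Φ x + Φ x • fderiv ℝ Ψ x) x := by
    intro x hx
    have d1 : HasFDerivAt Φ (fderiv ℝ Φ x) x :=
      ((hΦΩ.differentiableOn (by simp)).differentiableAt (hΩ.mem_nhds hx)).hasFDerivAt
    have d2 : HasFDerivAt Ψ (fderiv ℝ Ψ x) x := (hΨ.differentiable (by simp) x).hasFDerivAt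
    exact d2.mul d1
  -- boundedness of Φ on slabs
  have hslab : ∀ S, ∃ a, ∀ x ∈ Ω, |x 2| ≤ S → ‖Φ x‖ ≤ a := by
    intro S
    have hcp : IsCompact (slab C₀ S ∩ closure Ω) := isCompact_Icc.inter_right isClosed_closure
    obtain ⟨a, ha⟩ := hcp.exists_bound_of_continuousOn (hΦ.continuousOn.mono inter_subset_right)
    exact ⟨a, fun x hx hS => ha x ⟨mem_slab hC₀ (hΩbdd hx) hS, subset_closure hx⟩⟩
  obtain ⟨DΨ, hDΨ⟩ := ContDiff.lipschitzWith_of_hasCompactSupport hΨc hΨ (by simp)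
  obtain ⟨RΨ, hRΨ⟩ := hΨc.exists_bound_of_continuous hΨ.continuous
  obtain ⟨a₂, ha₂⟩ := hslab (2 * R)
  have hζd : ∀ x, HasFDerivAt ζ ((deriv χ (x 2 / R) * R⁻¹) •
      (ContinuousLinearMap.proj (R := ℝ) (φ := fun _ : Fin 3 => ℝ) 2)) x := by
    intro x
    have d1 : HasDerivAt χ (deriv χ (x 2 / R)) (x 2 / R) :=
      (hχ.differentiable (by simp) _).hasDerivAt
    have d2 : HasDerivAt (fun t : ℝ => t / R) (1 / R) (x 2) := (hasDerivAt_id _).div_const _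
    have d3 := d1.comp (x 2) d2
    have d4 : HasFDerivAt (fun x : E3 => x 2)
      (ContinuousLinearMap.proj (R := ℝ) (φ := fun _ : Fin 3 => ℝ) 2) x := hasFDerivAt_apply 2 x
    have := d3.comp_hasFDerivAt x d4
    rw [one_div] at this
    exact this
  have hΨd : ∀ x ∈ Ω, fderiv ℝ Ψ x = (deriv χ (x 2 / R) * R⁻¹) •
      (ContinuousLinearMap.proj (R := ℝ) (φ := fun _ : Fin 3 => ℝ) 2) := by
    intro x hx
    have : Ψ =ᶠ[𝓝 x] ζ := by
      filter_upwards [hΩ.mem_nhds hx] with y hy using hΨΩ y hy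
    rw [this.fderiv_eq, (hζd x).fderiv]
  have hbig : ∀ x : E3, ¬ |x 2| ≤ 2 * R → 2 < |x 2 / R| := by
    intro x hx
    rw [habs, lt_div_iff₀ hR]
    exact not_le.1 hx
  have hfbound : ∀ x ∈ Ω, ‖fderiv ℝ (fun x => Ψ x * Φ x) x‖ ≤ RΨ * M + |a₂| * DΨ := by
    intro x hx
    rw [(hfd x hx).fderiv]
    refine (norm_add_le _ _).trans ?_
    rw [norm_smul, norm_smul]
    have hRΨ0 : 0 ≤ RΨ := (norm_nonneg _).trans (hRΨ x)
    refine add_le_add (mul_le_mul (hRΨ x) (hM x hx) (norm_nonneg _) hRΨ0) ?_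
    by_cases h2 : |x 2| ≤ 2 * R
    · exact mul_le_mul ((ha₂ x hx h2).trans (le_abs_self _)) (norm_fderiv_le_of_lipschitz ℝ hDΨ)
        (norm_nonneg _) (abs_nonneg _)
    · rw [hΨd x hx, hχ3 _ (hbig x h2)]
      simp only [zero_mul, zero_smul, norm_zero, mul_zero]
      positivity
  have htest : Lop Ω v (fun x => Ψ x * Φ x) = 0 := by
    refine test_extension hΩ hv hB hΨc.mul_right ?_ ?_ hfbound hweak
    · exact (hΨ.differentiable (by simp)).differentiableOn.mul (hΦ.differentiableOn (by simp))
    · exact hΨ.contDiffOn.mul hΦΩ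
  -- the two terms
  let F₁ : E3 → ℝ := fun x => ζ x * fderiv ℝ Φ x (v x)
  let F₂ : E3 → ℝ := fun x => (deriv χ (x 2 / R) * R⁻¹) * (Φ x * v x 2)
  have hv2 : Measurable (fun x => v x 2) := (measurable_pi_apply 2).comp hv
  have hχm : Measurable (fun x : E3 => deriv χ (x 2 / R) * R⁻¹) :=
    ((measurable_deriv χ).comp
      (show Measurable (fun x : E3 => x 2 / R) by fun_prop)).mul_const _
  have hΦm : AEStronglyMeasurable Φ (volume.restrict Ω) :=
    hΦΩ.continuousOn.aestronglyMeasurable hΩm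
  have hv2b : ∀ x ∈ Ω, |v x 2| ≤ |B| := fun x hx =>
    (norm_le_pi_norm (v x) 2).trans ((hB x hx).trans (le_abs_self _))
  have hR2 : 0 < 2 * R := by positivity
  have hF₁ : IntegrableOn F₁ Ω := by
    refine (slab_integrable hC₀ hΩm hΩbdd ?_ hR2 (F := F₁) (c := |M| * |B|) ?_ ?_).1
    · exact (hζ.continuous.stronglyMeasurable.mul (Lop_sm v hv Φ)).aestronglyMeasurable
    · intro x hx
      change |ζ x * fderiv ℝ Φ x (v x)| ≤ _
      rw [abs_mul, abs_of_nonneg (hχ4 _)]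
      have h1 : |fderiv ℝ Φ x (v x)| ≤ |M| * |B| :=
        (ContinuousLinearMap.le_opNorm _ _).trans
          (mul_le_mul ((hM x hx).trans (le_abs_self _)) ((hB x hx).trans (le_abs_self _))
            (norm_nonneg _) (abs_nonneg _))
      have h2 := hχ4 (x 2 / R)
      have h3 := hχ5 (x 2 / R)
      nlinarith [abs_nonneg (fderiv ℝ Φ x (v x))]
    · intro x _ hx
      simp only [F₁, ζ]
      rw [hχ2 _ (hbig x (not_le.2 hx)), zero_mul]
  have hF₂ : IntegrableOn F₂ Ω := by
    refine (slab_integrable hC₀ hΩm hΩbdd ?_ hR2 (F := F₂) (c := (C₁ * R⁻¹) * (|a₂| * |B|)) ?_ ?_).1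
    · exact hχm.aestronglyMeasurable.mul (hΦm.mul hv2.aestronglyMeasurable)
    · intro x hx
      by_cases h2 : |x 2| ≤ 2 * R
      · simp only [F₂]
        rw [abs_mul, abs_mul, abs_mul, abs_of_pos (inv_pos.2 hR)]
        have h3 : |Φ x| ≤ |a₂| := (ha₂ x hx h2).trans (le_abs_self _)
        have h4 := hv2b x hx
        have h5 := hC₁ (x 2 / R)
        gcongr
      · simp only [F₂]
        rw [hχ3 _ (hbig x h2)]
        simp only [zero_mul, abs_zero]
        positivity
    · intro x _ hx
      simp only [F₂]
      rw [hχ3 _ (hbig x (not_le.2 hx)), zero_mul, zero_mul]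
  have hsum : ∫ x in Ω, F₁ x = - ∫ x in Ω, F₂ x := by
    have h1 : Lop Ω v (fun x => Ψ x * Φ x) = ∫ x in Ω, (F₁ x + F₂ x) := by
      apply setIntegral_congr_fun hΩm
      intro x hx
      simp only [F₁, F₂]
      rw [(hfd x hx).fderiv, hΨd x hx, hΨΩ x hx]
      simp only [add_apply, smul_apply, smul_eq_mul, ContinuousLinearMap.proj_apply]
      ring
    rw [integral_add hF₁ hF₂, htest] at h1
    linarith
  obtain ⟨hE1, -⟩ := Eng_integrable hC₀ hΩm hΩbdd hG hc hR
  obtain ⟨hE2, -⟩ := Eng_integrable hC₀ hΩm hΩbdd hG hc hR2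
  have hlow : lam * Eng Ω G R ≤ ∫ x in Ω, F₁ x := by
    unfold Eng
    rw [← integral_const_mul]
    apply setIntegral_mono_on (hE1.const_mul _) hF₁ hΩm
    intro x hx
    have h1 := hell x hx
    have h2 : 0 ≤ lam * G x := mul_nonneg hlam.le (hG0 x)
    simp only [F₁, ζ]
    by_cases h3 : |x 2| ≤ R
    · rw [ind_one h3, hχ1 _ (by rw [habs]; exact (div_le_one hR).2 h3)]
      linarith
    · rw [ind_zero (not_le.1 h3), zero_mul, mul_zero]
      exact mul_nonneg (hχ4 _) (h2.trans h1)
  obtain ⟨sl1, sl2⟩ := slice_integral hΩm hF₂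
  obtain ⟨sl3, sl4⟩ := slice_integral hΩm hE2
  have hslice : ∀ t : ℝ, ‖∫ x' in crossSection Ω t, F₂ (Fin.snoc x' t : E3)‖ ≤
      (C₁ / R * (Λ₀ ^ 2 / 2 + k / 2)) * ∫ x' in crossSection Ω t,
        ((Icc (-(2 * R)) (2 * R)).indicator (fun _ => (1 : ℝ)) ((Fin.snoc x' t : E3) 2)
          * G (Fin.snoc x' t : E3)) := by
    intro t
    simp only [F₂, snoc3_two, integral_const_mul]
    by_cases ht : |t| ≤ 2 * R
    · rw [ind_one ht, one_mul, norm_mul, norm_mul, norm_inv, Real.norm_of_nonneg hR.le]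
      have hop : IsOpen (crossSection Ω t) := hΩ.preimage (continuous_snoc3 t)
      have hmsn := (continuous_snoc3 t).measurable
      obtain ⟨a, ha⟩ := hslab |t|
      have : IsFiniteMeasure (volume.restrict (crossSection Ω t)) :=
        ⟨by rw [Measure.restrict_apply_univ]; exact hSigma t⟩
      have hmem := ae_restrict_mem (μ := volume) hop.measurableSet
      have key := section_est (μ := volume.restrict (crossSection Ω t))
        (φ := fun x' => Φ (Fin.snoc x' t : E3)) (q := fun x' => v (Fin.snoc x' t : E3) 2)
        (G := fun x' => G (Fin.snoc x' t : E3)) (a := a) (b := |B|) (c := c) (k := k) (l := Λ₀)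
        (m := (∫ y' in crossSection Ω t, Φ (Fin.snoc y' t)) /
              (volume (crossSection Ω t)).toReal)
        (by
          refine ContinuousOn.aestronglyMeasurable ?_ hop.measurableSet
          exact hΦΩ.continuousOn.comp (continuous_snoc3 t).continuousOn (fun x' hx' => hx'))
        (hv2.comp hmsn).aestronglyMeasurable (hG.comp hmsn).aestronglyMeasurable
        (by
          filter_upwards [hmem] with x' hx'
          exact ha _ hx' (by rw [snoc3_two]))
        (by
          filter_upwards [hmem] with x' hx'
          exact hv2b _ hx')
        (by
          filter_upwards [hmem] with x' hx'
          exact hc _ hx')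
        (by
          filter_upwards [hmem] with x' hx'
          exact hq _ hx')
        (hflux t)
        (by
          have := hP t
          rw [hGdef]
          exact this)
      calc ‖deriv χ (t / R)‖ * R⁻¹ * ‖∫ x' in crossSection Ω t,
            Φ (Fin.snoc x' t : E3) * v (Fin.snoc x' t : E3) 2‖
          ≤ C₁ * R⁻¹ * ((Λ₀ ^ 2 / 2 + k / 2) * ∫ x' in crossSection Ω t, G (Fin.snoc x' t : E3)) := by
            apply mul_le_mul _ key (abs_nonneg _) (by positivity)
            exact mul_le_mul_of_nonneg_right (hC₁ _) (by positivity)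
        _ = _ := by rw [div_eq_mul_inv]; ring
    · have h2 : 2 < |t / R| := by
        rw [habs, lt_div_iff₀ hR]
        exact not_le.1 ht
      rw [hχ3 _ h2, ind_zero (not_le.1 ht)]
      simp
  calc lam * Eng Ω G R ≤ ∫ x in Ω, F₁ x := hlow
    _ = - ∫ x in Ω, F₂ x := hsum
    _ ≤ ‖∫ x in Ω, F₂ x‖ := neg_le_abs _
    _ = ‖∫ t : ℝ, ∫ x' in crossSection Ω t, F₂ (Fin.snoc x' t : E3)‖ := by rw [sl1]
    _ ≤ ∫ t : ℝ, (C₁ / R * (Λ₀ ^ 2 / 2 + k / 2)) * ∫ x' in crossSection Ω t,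
        ((Icc (-(2 * R)) (2 * R)).indicator (fun _ => (1 : ℝ)) ((Fin.snoc x' t : E3) 2)
          * G (Fin.snoc x' t : E3)) :=
        norm_integral_le_of_norm_le (sl4.const_mul _) (Eventually.of_forall hslice)
    _ = _ := by
        rw [integral_const_mul, ← sl3]
        rfl


lemma Eng_mono {C₀ : ℝ} (hC₀ : 0 < C₀) {Ω : Set E3} (hΩ : MeasurableSet Ω)
    (hΩbdd : Ω ⊆ {x | (x 0) ^ 2 + (x 1) ^ 2 < C₀ ^ 2}) {G : E3 → ℝ} (hG : Measurable G)
    {c : ℝ} (hc : ∀ x ∈ Ω, |G x| ≤ c) (hG0 : ∀ x, 0 ≤ G x) {R S : ℝ} (hR : 0 < R)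
    (hRS : R ≤ S) : Eng Ω G R ≤ Eng Ω G S := by
  apply setIntegral_mono_on (Eng_integrable hC₀ hΩ hΩbdd hG hc hR).1
    (Eng_integrable hC₀ hΩ hΩbdd hG hc (hR.trans_le hRS)).1 hΩ
  intro x _
  by_cases h : |x 2| ≤ R
  · rw [ind_one h, ind_one (h.trans hRS)]
  · rw [ind_zero (not_le.1 h), zero_mul]
    exact mul_nonneg (ind_nonneg _ _) (hG0 x)

lemma Eng_zero {C₀ : ℝ} (hC₀ : 0 < C₀) {Ω : Set E3} (hΩ : MeasurableSet Ω)
    (hΩbdd : Ω ⊆ {x | (x 0) ^ 2 + (x 1) ^ 2 < C₀ ^ 2}) {G : E3 → ℝ} (hG : Measurable G)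
    {c : ℝ} (hc : ∀ x ∈ Ω, |G x| ≤ c) (hG0 : ∀ x, 0 ≤ G x) {lam K : ℝ} (hlam : 0 < lam)
    (hK : 0 ≤ K) (h : ∀ R, 0 < R → lam * Eng Ω G R ≤ (K / R) * Eng Ω G (2 * R))
    {R : ℝ} (hR : 0 < R) : Eng Ω G R ≤ 0 := by
  set D : ℝ := |c| * (16 * C₀ ^ 2) with hD
  have hD0 : 0 ≤ D := by positivity
  have b1 : ∀ S, 0 < S → Eng Ω G S ≤ K * D / lam := by
    intro S hS
    have h1 := h S hS
    have h2 := (Eng_integrable hC₀ hΩ hΩbdd hG hc (R := 2 * S) (by positivity)).2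
    have h3 : (K / S) * Eng Ω G (2 * S) ≤ (K / S) * (D * S) := by
      apply mul_le_mul_of_nonneg_left _ (by positivity)
      rw [hD]; linarith
    have h4 : (K / S) * (D * S) = K * D := by field_simp
    rw [le_div_iff₀ hlam]
    linarith
  set T : ℝ := K * D / lam with hT
  have hT0 : 0 ≤ T := by positivity
  apply le_of_forall_pos_le_add
  intro ε hε
  set S : ℝ := max R (K * T / (lam * ε)) with hS
  have hS0 : 0 < S := hR.trans_le (le_max_left _ _)
  have h1 := h S hS0
  have h2 : (K / S) * Eng Ω G (2 * S) ≤ (K / S) * T :=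
    mul_le_mul_of_nonneg_left (b1 _ (by positivity)) (by positivity)
  have h3 : (K / S) * T ≤ lam * ε := by
    have : K * T / (lam * ε) ≤ S := le_max_right _ _
    rw [div_le_iff₀ (by positivity)] at this
    rw [div_mul_eq_mul_div, div_le_iff₀ hS0]
    linarith
  have h4 : Eng Ω G S ≤ ε := le_of_mul_le_mul_left (by linarith) hlam
  have h5 := Eng_mono hC₀ hΩ hΩbdd hG hc hG0 hR (le_max_left R (K * T / (lam * ε)))
  linarith

lemma G_zero {C₀ : ℝ} (hC₀ : 0 < C₀) {Ω : Set E3} (hΩ : IsOpen Ω)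
    (hΩbdd : Ω ⊆ {x | (x 0) ^ 2 + (x 1) ^ 2 < C₀ ^ 2}) {G : E3 → ℝ} (hG : Measurable G)
    {c : ℝ} (hc : ∀ x ∈ Ω, |G x| ≤ c) (hG0 : ∀ x, 0 ≤ G x) (hGc : ContinuousOn G Ω)
    (h : ∀ R, 0 < R → Eng Ω G R ≤ 0) : ∀ x ∈ Ω, G x = 0 := by
  intro x hx
  have hR : 0 < |x 2| + 1 := by positivity
  set R := |x 2| + 1 with hRdef
  have hnn : ∀ y : E3, 0 ≤ (Icc (-R) R).indicator (fun _ => (1 : ℝ)) (y 2) * G y :=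
    fun y => mul_nonneg (ind_nonneg _ _) (hG0 y)
  have hE : Eng Ω G R = 0 := le_antisymm (h R hR) (integral_nonneg hnn)
  have hae := (integral_eq_zero_iff_of_nonneg hnn
    (Eng_integrable hC₀ hΩ.measurableSet hΩbdd hG hc hR).1).1 hE
  let U : Set E3 := Ω ∩ {y | |y 2| < R}
  have hU : IsOpen U := hΩ.inter (isOpen_lt (by fun_prop) continuous_const)
  have hae2 : G =ᵐ[volume.restrict U] (fun _ => (0 : ℝ)) := by
    have h1 := ae_restrict_of_ae_restrict_of_subset (inter_subset_left : U ⊆ Ω) hae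
    filter_upwards [h1, ae_restrict_mem hU.measurableSet] with y hy hyU
    have h2 : |y 2| ≤ R := le_of_lt hyU.2
    rw [ind_one h2, one_mul] at hy
    exact hy
  exact Measure.eqOn_open_of_ae_eq hae2 hU (hGc.mono inter_subset_left) continuousOn_const
    ⟨hx, by simp only [mem_setOf_eq, hRdef]; linarith⟩

end helpers

/-- the uniqueness (Liouville) mechanism: a bounded-gradient weak solution
of div(A∇Φ) = 0 with conormal boundary condition, uniformly elliptic symmetric A,
zero flux through every cross-section, in a domain of bounded cross-section satisfying
the uniform cross-sectional Poincaré inequality, has ∇Φ ≡ 0. -/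
theorem uniqueness_mechanism_nozzle
    (C₀ Λ₀ lam Lam : ℝ) (hC₀ : 0 < C₀) (hΛ₀ : 0 < Λ₀) (hlam : 0 < lam) (hlamLam : lam ≤ Lam)
    (Ω : Set (Fin 3 → ℝ)) (hΩopen : IsOpen Ω) (hΩconn : IsConnected Ω)
    (hΩbdd : Ω ⊆ {x | (x 0) ^ 2 + (x 1) ^ 2 < C₀ ^ 2})
    -- every cross-section has positive finite area
    (hSigma : ∀ t : ℝ, 0 < volume (crossSection Ω t) ∧ volume (crossSection Ω t) < ⊤)
    -- uniform cross-sectional Poincaré inequality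
    (hPoincare : ∀ t : ℝ, ∀ w : (Fin 3 → ℝ) → ℝ, ContDiffOn ℝ 1 w (closure Ω) →
      ∫ x' in crossSection Ω t,
          (w (Fin.snoc x' t)
            - (∫ y' in crossSection Ω t, w (Fin.snoc y' t)) /
              (volume (crossSection Ω t)).toReal) ^ 2
        ≤ Λ₀ ^ 2 * ∫ x' in crossSection Ω t, normSq3 (grad3 w (Fin.snoc x' t)))
    -- the symmetric uniformly elliptic coefficient matrix A
    (A : (Fin 3 → ℝ) → Fin 3 → Fin 3 → ℝ) (hAmeas : Measurable A)
    (hAsymm : ∀ x ∈ Ω, ∀ i j : Fin 3, A x i j = A x j i)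
    (hAell : ∀ x ∈ Ω, ∀ ξ : Fin 3 → ℝ,
      lam * normSq3 ξ ≤ ∑ i, ∑ j, ξ i * A x i j * ξ j ∧
      ∑ i, ∑ j, ξ i * A x i j * ξ j ≤ Lam * normSq3 ξ)
    -- Φ : C¹ with bounded gradient, weak solution, zero flux
    (Φ : (Fin 3 → ℝ) → ℝ) (hΦC1 : ContDiffOn ℝ 1 Φ (closure Ω))
    (hΦgradbdd : ∃ M : ℝ, ∀ x ∈ Ω, norm3 (grad3 Φ x) ≤ M)
    (hweak : ∀ ψ : (Fin 3 → ℝ) → ℝ, ContDiff ℝ 1 ψ → HasCompactSupport ψ →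
      ∫ x in Ω, ∑ i, (∑ j, A x i j * grad3 Φ x j) * grad3 ψ x i = 0)
    (hflux : ∀ t : ℝ,
      ∫ x' in crossSection Ω t, ∑ j, A (Fin.snoc x' t) 2 j * grad3 Φ (Fin.snoc x' t) j = 0) :
    ∀ x ∈ Ω, grad3 Φ x = 0 := by
  classical
  obtain ⟨M, hM⟩ := hΦgradbdd
  obtain ⟨χ, C₁, hχ, hC₁0, hC₁, hχ1, hχ2, hχ3, hχ4, hχ5⟩ := cutoff_exists
  let v : E3 → E3 := fun x i => ∑ j, A x i j * grad3 Φ x j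
  let G : E3 → ℝ := fun x => normSq3 (grad3 Φ x)
  have hLam : 0 < Lam := hlam.trans_le hlamLam
  have hgm : ∀ i, Measurable (fun x => grad3 Φ x i) := fun i =>
    measurable_fderiv_apply_const ℝ Φ _
  have hAm : ∀ i j, Measurable (fun x => A x i j) := fun i j =>
    (measurable_pi_apply j).comp ((measurable_pi_apply i).comp hAmeas)
  have hv : Measurable v := measurable_pi_lambda _ fun i =>
    Finset.measurable_fun_sum _ fun j _ => (hAm i j).mul (hgm j)
  have hGm : Measurable G := by
    change Measurable (fun x => ∑ i, (grad3 Φ x i) ^ 2)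
    exact Finset.measurable_fun_sum _ fun i _ => (hgm i).pow_const 2
  have hG0 : ∀ x, 0 ≤ G x := fun x => Finset.sum_nonneg fun i _ => sq_nonneg _
  have hM0 : ∀ x ∈ Ω, 0 ≤ M := fun x hx => (Real.sqrt_nonneg _).trans (hM x hx)
  have hGM : ∀ x ∈ Ω, G x ≤ M ^ 2 := fun x hx => (Real.sqrt_le_left (hM0 x hx)).1 (hM x hx)
  have hc : ∀ x ∈ Ω, |G x| ≤ M ^ 2 := fun x hx => by
    rw [abs_of_nonneg (hG0 x)]; exact hGM x hx
  have hgi : ∀ x i, (grad3 Φ x i) ^ 2 ≤ G x := fun x i =>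
    Finset.single_le_sum (f := fun i => (grad3 Φ x i) ^ 2) (fun i _ => sq_nonneg _)
      (Finset.mem_univ i)
  have hgM : ∀ x ∈ Ω, ∀ i, |grad3 Φ x i| ≤ M := fun x hx i =>
    abs_le_of_sq_le_sq ((hgi x i).trans (hGM x hx)) (hM0 x hx)
  have hAb : ∀ x ∈ Ω, ∀ i j, |A x i j| ≤ Lam := fun x hx =>
    entry_bound hlam (hAsymm x hx) (hAell x hx)
  have hfb : ∀ x ∈ Ω, ‖fderiv ℝ Φ x‖ ≤ 3 * M := by
    intro x hx
    have hMx := hM0 x hx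
    refine ContinuousLinearMap.opNorm_le_bound _ (by positivity) fun u => ?_
    rw [fderiv_eq_sum]
    calc ‖∑ i, u i * grad3 Φ x i‖ ≤ ∑ i : Fin 3, ‖u‖ * M := by
          refine norm_sum_le_of_le _ fun i _ => ?_
          rw [norm_mul]
          exact mul_le_mul (norm_le_pi_norm u i) (hgM x hx i) (norm_nonneg _) (norm_nonneg _)
      _ = 3 * M * ‖u‖ := by simp; ring
  have hvb : ∀ x ∈ Ω, ‖v x‖ ≤ 3 * (Lam * M) := by
    intro x hx
    have hMx := hM0 x hx
    refine (pi_norm_le_iff_of_nonneg (by positivity)).2 fun i => ?_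
    calc ‖∑ j, A x i j * grad3 Φ x j‖ ≤ ∑ j : Fin 3, Lam * M := by
          refine norm_sum_le_of_le _ fun j _ => ?_
          rw [norm_mul]
          exact mul_le_mul (hAb x hx i j) (hgM x hx j) (norm_nonneg _) hLam.le
      _ = 3 * (Lam * M) := by simp
  have hell : ∀ x ∈ Ω, lam * G x ≤ fderiv ℝ Φ x (v x) := by
    intro x hx
    refine (hAell x hx (grad3 Φ x)).1.trans_eq ?_
    rw [fderiv_eq_sum]
    refine Finset.sum_congr rfl fun i _ => ?_
    simp only [v]
    rw [Finset.sum_mul]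
    refine Finset.sum_congr rfl fun j _ => ?_
    ring
  have hq : ∀ x ∈ Ω, v x 2 ^ 2 ≤ (3 * Lam ^ 2) * G x := by
    intro x hx
    calc (∑ j, A x 2 j * grad3 Φ x j) ^ 2
        ≤ (∑ j, (A x 2 j) ^ 2) * ∑ j, (grad3 Φ x j) ^ 2 :=
          Finset.sum_mul_sq_le_sq_mul_sq _ _ _
      _ ≤ (3 * Lam ^ 2) * G x := by
          refine mul_le_mul_of_nonneg_right ?_ (hG0 x)
          calc ∑ j, (A x 2 j) ^ 2 ≤ ∑ j : Fin 3, Lam ^ 2 :=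
                Finset.sum_le_sum fun j _ => sq_le_sq' (abs_le.1 (hAb x hx 2 j)).1
                  (abs_le.1 (hAb x hx 2 j)).2
            _ = 3 * Lam ^ 2 := by simp
  have hw : ∀ ψ : E3 → ℝ, ContDiff ℝ 1 ψ → HasCompactSupport ψ → Lop Ω v ψ = 0 := by
    intro ψ h1 h2
    rw [← hweak ψ h1 h2]
    unfold Lop
    simp only [fderiv_eq_sum]
    rfl
  have hGc : ContinuousOn G Ω := by
    have h1 : ContinuousOn (fderiv ℝ Φ) Ω :=
      (hΦC1.mono subset_closure).continuousOn_fderiv_of_isOpen hΩopen le_rfl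
    change ContinuousOn (fun x => ∑ i, (grad3 Φ x i) ^ 2) Ω
    refine continuousOn_finsetSum _ fun i _ => ContinuousOn.pow ?_ 2
    exact h1.clm_apply continuousOn_const
  have hE : ∀ R, 0 < R → lam * Eng Ω G R ≤
      ((C₁ * (Λ₀ ^ 2 / 2 + 3 * Lam ^ 2 / 2)) / R) * Eng Ω G (2 * R) := by
    intro R hR
    have := energy_ineq hC₀ hΩopen hΩbdd (fun t => (hSigma t).2) hΦC1
      (fun t => hPoincare t Φ hΦC1) hv hvb hfb (G := G) rfl hGm hc hG0 hlam hell hq hw hflux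
      hχ hC₁ hχ1 hχ2 hχ3 hχ4 hχ5 hR
    rw [div_mul_eq_mul_div] at this
    exact this
  have hfin := G_zero hC₀ hΩopen hΩbdd hGm hc hG0 hGc fun R hR =>
    Eng_zero hC₀ hΩopen.measurableSet hΩbdd hGm hc hG0 hlam (by positivity) hE hR
  intro x hx
  have h0 := hfin x hx
  ext i
  have h1 := hgi x i
  rw [h0] at h1
  exact pow_eq_zero_iff (two_ne_zero) |>.1 (le_antisymm h1 (sq_nonneg _))
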